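/- Let 0<α≤1 and let {q_n : n≥0} be a non-increasing sequence of non-negative reals with q_0>0 satisfying n^α/Q_n = O(1) and (q_n − q_{n+1})/n^{α−2} = O(1) as n→∞. Then there exists a constant c_α such that for all N∈ℕ, all r ≥ M_N, all 0 ≤ k < l ≤ N−1, all 1 ≤ s_k ≤ m_k−1 and 1 ≤ s_l ≤ m_l−1, and all x ∈ I_{l+1}(s_k e_k + s_l e_l): ∫_{I_N} |F_r(x−t)| dμ(t) ≤ c_α M_l^α M_k / (r^α M_N). -/

import Mathlib

open MeasureTheory Filter Finset Asymptotics
open scoped ENNReal NNReal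

noncomputable section

namespace Vilenkin

/-- The Vilenkin group `G_m`: the complete direct product of the cyclic groups `Z_{m_n}`. -/
abbrev G (m : ℕ → ℕ) := ∀ n, ZMod (m n)

/-- The generalized number system `M_0 = 1`, `M_{n+1} = m_n M_n`. -/
def MM (m : ℕ → ℕ) : ℕ → ℕ
  | 0 => 1
  | n + 1 => m n * MM m n

/-- The generalized Rademacher functions `r_k(x) = exp(2 π i x_k / m_k)`. -/
def rade (m : ℕ → ℕ) (k : ℕ) (x : G m) : ℂ :=
  Complex.exp (2 * Real.pi * Complex.I * ((x k).val : ℂ) / (m k : ℂ))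

/-- The Vilenkin system `ψ_n = ∏_k r_k^{n_k}`, where `n = ∑_k n_k M_k` is the expansion of `n`
in the generalized number system (the digits `n_k = (n / M_k) mod m_k` vanish for `k > n`). -/
def psi (m : ℕ → ℕ) (n : ℕ) (x : G m) : ℂ :=
  ∏ k ∈ Finset.range (n + 1), rade m k x ^ (n / MM m k % m k)

/-- The Dirichlet kernels `D_n = ∑_{k=0}^{n-1} ψ_k`. -/
def D (m : ℕ → ℕ) (n : ℕ) (x : G m) : ℂ := ∑ k ∈ Finset.range n, psi m k x

/-- The Fejér kernels `K_n = (1/n) ∑_{k=1}^{n} D_k`. -/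
def K (m : ℕ → ℕ) (n : ℕ) (x : G m) : ℂ := (n : ℂ)⁻¹ * ∑ k ∈ Finset.Icc 1 n, D m k x

/-- `Q_n = ∑_{k=0}^{n-1} q_k`. -/
def Q (q : ℕ → ℝ) (n : ℕ) : ℝ := ∑ k ∈ Finset.range n, q k

/-- The Nörlund kernels `F_n = (1/Q_n) ∑_{k=1}^{n} q_{n-k} D_k`. -/
def F (m : ℕ → ℕ) (q : ℕ → ℝ) (n : ℕ) (x : G m) : ℂ :=
  ((Q q n : ℝ) : ℂ)⁻¹ * ∑ k ∈ Finset.Icc 1 n, (q (n - k) : ℂ) * D m k x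

/-- The interval (cylinder) `I_n(x) = {y : y_j = x_j for all j < n}`. -/
def cyl (m : ℕ → ℕ) (n : ℕ) (x : G m) : Set (G m) := {y | ∀ j < n, y j = x j}

/-- The element `s_k e_k` of `G_m` (value `s_k` in coordinate `k`, zero elsewhere). -/
def oneSpike (m : ℕ → ℕ) (k sk : ℕ) : G m := fun j => if j = k then (sk : ZMod (m j)) else 0

/-- The element `s_k e_k + s_l e_l` of `G_m` (for `k ≠ l`). -/
def twoSpike (m : ℕ → ℕ) (k sk l sl : ℕ) : G m :=
  fun j => if j = k then (sk : ZMod (m j)) else if j = l then (sl : ZMod (m j)) else 0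

/-- The σ-algebra `𝔉_n` generated by the intervals `I_n(x)`, i.e. by the first `n`
coordinates. -/
def filt (m : ℕ → ℕ) (n : ℕ) : MeasurableSpace (G m) :=
  MeasurableSpace.comap (fun x (i : Fin n) => x i.val) inferInstance

/-- `f = (f^{(n)})` is a martingale with respect to the filtration `(𝔉_n)` and the measure `μ`. -/
def IsMartingale (m : ℕ → ℕ) (μ : Measure (G m)) (f : ℕ → G m → ℂ) : Prop :=
  (∀ n, Integrable (f n) μ) ∧ (∀ n, Measurable[filt m n] (f n)) ∧
    ∀ n, ∀ s : Set (G m), MeasurableSet[filt m n] s →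
      ∫ x in s, f (n + 1) x ∂μ = ∫ x in s, f n x ∂μ

/-- The `L_p`-quasinorm `(∫ g^p dμ)^{1/p}` of a nonnegative (extended-real-valued) function. -/
def lpNormE (m : ℕ → ℕ) (μ : Measure (G m)) (p : ℝ) (g : G m → ℝ≥0∞) : ℝ≥0∞ :=
  (∫⁻ x, g x ^ p ∂μ) ^ (1 / p)

/-- The martingale Hardy space quasinorm `‖f‖_{H_p} = ‖sup_n |f^{(n)}|‖_p`. -/
def HpNorm (m : ℕ → ℕ) (μ : Measure (G m)) (p : ℝ) (f : ℕ → G m → ℂ) : ℝ≥0∞ :=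
  lpNormE m μ p (fun x => ⨆ n, (‖f n x‖₊ : ℝ≥0∞))

/-- The Vilenkin-Fourier coefficients of a martingale:
`f̂(i) = lim_k ∫ f^{(k)} conj ψ_i dμ`. -/
def mcoef (m : ℕ → ℕ) (μ : Measure (G m)) (f : ℕ → G m → ℂ) (i : ℕ) : ℂ :=
  limUnder atTop fun k => ∫ x, f k x * (starRingEnd ℂ) (psi m i x) ∂μ

/-- The partial sums `S_n f = ∑_{k=0}^{n-1} f̂(k) ψ_k` of the Vilenkin-Fourier series of a
martingale. -/
def mS (m : ℕ → ℕ) (μ : Measure (G m)) (f : ℕ → G m → ℂ) (n : ℕ) (x : G m) : ℂ :=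
  ∑ k ∈ Finset.range n, mcoef m μ f k * psi m k x

/-- The Nörlund means `t_n f = (1/Q_n) ∑_{k=1}^{n} q_{n-k} S_k f` of a martingale. -/
def mT (m : ℕ → ℕ) (q : ℕ → ℝ) (μ : Measure (G m)) (f : ℕ → G m → ℂ) (n : ℕ) (x : G m) : ℂ :=
  ((Q q n : ℝ) : ℂ)⁻¹ * ∑ k ∈ Finset.Icc 1 n, (q (n - k) : ℂ) * mS m μ f k x

/-- The Cesàro numbers `A_0^α = 0`, `A_n^α = (α+1)⋯(α+n)/n!`. -/
def AC (α : ℝ) (n : ℕ) : ℝ :=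
  if n = 0 then 0 else (∏ j ∈ Finset.Icc 1 n, (α + (j : ℝ))) / (n.factorial : ℝ)

/-- The `(C,α)` (Cesàro) means `σ_n^α f = (1/A_n^α) ∑_{k=1}^{n} A_{n-k}^{α-1} S_k f` of a
martingale. -/
def mCes (m : ℕ → ℕ) (α : ℝ) (μ : Measure (G m)) (f : ℕ → G m → ℂ) (n : ℕ) (x : G m) : ℂ :=
  ((AC α n : ℝ) : ℂ)⁻¹ * ∑ k ∈ Finset.Icc 1 n, ((AC (α - 1) (n - k) : ℝ) : ℂ) * mS m μ f k x

/-- The Fejér means `σ_n f = (1/n) ∑_{k=1}^{n} S_k f` of a martingale. -/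
def mFej (m : ℕ → ℕ) (μ : Measure (G m)) (f : ℕ → G m → ℂ) (n : ℕ) (x : G m) : ℂ :=
  (n : ℂ)⁻¹ * ∑ k ∈ Finset.Icc 1 n, mS m μ f k x

/-- The Vilenkin-Fourier coefficients of an integrable function. -/
def fcoef (m : ℕ → ℕ) (μ : Measure (G m)) (g : G m → ℂ) (i : ℕ) : ℂ :=
  ∫ x, g x * (starRingEnd ℂ) (psi m i x) ∂μ

/-- The partial sums of the Vilenkin-Fourier series of an integrable function. -/
def fS (m : ℕ → ℕ) (μ : Measure (G m)) (g : G m → ℂ) (n : ℕ) (x : G m) : ℂ :=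
  ∑ k ∈ Finset.range n, fcoef m μ g k * psi m k x

/-- The Nörlund means of an integrable function. -/
def fT (m : ℕ → ℕ) (q : ℕ → ℝ) (μ : Measure (G m)) (g : G m → ℂ) (n : ℕ) (x : G m) : ℂ :=
  ((Q q n : ℝ) : ℂ)⁻¹ * ∑ k ∈ Finset.Icc 1 n, (q (n - k) : ℂ) * fS m μ g k x


/-! ### The weights -/

theorem ratio_rpow_le (p : ℝ) (hp0 : 0 ≤ p) (hp1 : p ≤ 1) (i : ℝ) (hi : 1 ≤ i) :
    i ^ p ≤ (i + 1) ^ p * (1 - p / (i + 1)) := by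
  have h := rpow_one_add_le_one_add_mul_self (s := -(1 / (i + 1))) (by
    have : 1 / (i + 1) ≤ 1 := by rw [div_le_one (by linarith)]; linarith
    linarith) hp0 hp1
  have e : 1 + -(1 / (i + 1)) = i / (i + 1) := by field_simp; ring
  rw [e, Real.div_rpow (by linarith) (by linarith)] at h
  have hpos : 0 < (i + 1) ^ p := Real.rpow_pos_of_pos (by linarith) _
  rw [div_le_iff₀ hpos] at h
  calc i ^ p ≤ _ := h
    _ = _ := by ring

theorem diff_low (α : ℝ) (hα0 : 0 < α) (hα1 : α < 1) (i : ℝ) (hi : 1 ≤ i) :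
    (1 - α) / 2 * i ^ (α - 2) ≤ i ^ (α - 1) - (i + 1) ^ (α - 1) := by
  have h := ratio_rpow_le (1 - α) (by linarith) (by linarith) i hi
  have hi0 : 0 < i := by linarith
  have e1 : i ^ (α - 1) * i ^ (1 - α) = 1 := by
    rw [← Real.rpow_add hi0]; simp
  have e2 : (i + 1) ^ (α - 1) * (i + 1) ^ (1 - α) = 1 := by
    rw [← Real.rpow_add (by linarith)]; simp
  have e3 : i ^ (α - 1) = i ^ (α - 2) * i := by
    rw [← Real.rpow_add_one hi0.ne']; ring_nf
  have p1 : 0 < i ^ (α - 1) := Real.rpow_pos_of_pos hi0 _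
  have p2 : 0 < (i + 1) ^ (α - 1) := Real.rpow_pos_of_pos (by linarith) _
  have p3 : 0 < i ^ (α - 2) := Real.rpow_pos_of_pos hi0 _
  have h2 : (i + 1) ^ (α - 1) ≤ i ^ (α - 1) * (1 - (1 - α) / (i + 1)) := by
    have := mul_le_mul_of_nonneg_left h (mul_pos p1 p2).le
    calc (i + 1) ^ (α - 1) = i ^ (α - 1) * (i + 1) ^ (α - 1) * i ^ (1 - α) := by
          linear_combination (-(i + 1) ^ (α - 1)) * e1
      _ ≤ _ := this
      _ = _ := by linear_combination (i ^ (α - 1) * (1 - (1 - α) / (i + 1))) * e2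
  have h3 : (1 - α) / 2 * i ^ (α - 2) ≤ i ^ (α - 1) * ((1 - α) / (i + 1)) := by
    rw [e3]
    have : 1 / 2 ≤ i / (i + 1) := by
      rw [div_le_div_iff₀ (by norm_num) (by linarith)]; linarith
    calc (1 - α) / 2 * i ^ (α - 2) = ((1 - α) * i ^ (α - 2)) * (1 / 2) := by ring
      _ ≤ ((1 - α) * i ^ (α - 2)) * (i / (i + 1)) :=
          mul_le_mul_of_nonneg_left this (mul_nonneg (by linarith) p3.le)
      _ = _ := by ring
  linarith

theorem diff_up (α : ℝ) (hα0 : 0 < α) (hα1 : α < 1) (i : ℝ) (hi : 1 ≤ i) :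
    α / 2 * i ^ (α - 1) ≤ (i + 1) ^ α - i ^ α := by
  have h := ratio_rpow_le α hα0.le hα1.le i hi
  have hi0 : 0 < i := by linarith
  have e3 : i ^ α = i ^ (α - 1) * i := by
    rw [← Real.rpow_add_one hi0.ne']; ring_nf
  have p1 : 0 < i ^ (α - 1) := Real.rpow_pos_of_pos hi0 _
  have hle : i ^ α ≤ (i + 1) ^ α := Real.rpow_le_rpow hi0.le (by linarith) hα0.le
  have : 1 / 2 ≤ i / (i + 1) := by
    rw [div_le_div_iff₀ (by norm_num) (by linarith)]; linarith
  have h3 : α / 2 * i ^ (α - 1) ≤ (i + 1) ^ α * (α / (i + 1)) := by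
    calc α / 2 * i ^ (α - 1) = (α * i ^ (α - 1)) * (1 / 2) := by ring
      _ ≤ (α * i ^ (α - 1)) * (i / (i + 1)) :=
          mul_le_mul_of_nonneg_left this (mul_nonneg hα0.le p1.le)
      _ = i ^ α * (α / (i + 1)) := by rw [e3]; ring
      _ ≤ _ := mul_le_mul_of_nonneg_right hle (div_nonneg hα0.le (by linarith))
  linarith

theorem mul_q_le_Q (q : ℕ → ℝ) (hqmono : ∀ n, q (n + 1) ≤ q n) (n : ℕ) :
    (n : ℝ) * q n ≤ Q q n := by
  have ha : Antitone q := antitone_nat_of_succ_le hqmono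
  unfold Q
  have : ∑ i ∈ Finset.range n, q n ≤ ∑ i ∈ Finset.range n, q i :=
    Finset.sum_le_sum fun i hi => ha (Finset.mem_range.1 hi).le
  simpa using this

theorem Q_pos (q : ℕ → ℝ) (hq0 : 0 < q 0) (hqnn : ∀ n, 0 ≤ q n) (n : ℕ) (hn : 1 ≤ n) :
    0 < Q q n := by
  unfold Q
  exact Finset.sum_pos' (fun i _ => hqnn i) ⟨0, by simp; omega, hq0⟩

theorem Q_ratio (α : ℝ) (hα0 : 0 < α) (hα1 : α ≤ 1)
    (q : ℕ → ℝ) (hq0 : 0 < q 0) (hqnn : ∀ n, 0 ≤ q n) (hqmono : ∀ n, q (n + 1) ≤ q n)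
    (hQ : (fun n : ℕ => (n : ℝ) ^ α / Q q n) =O[atTop] (fun _ => (1 : ℝ)))
    (hq' : (fun n : ℕ => (q n - q (n + 1)) / (n : ℝ) ^ (α - 2)) =O[atTop] (fun _ => (1 : ℝ))) :
    ∃ C : ℝ, 0 ≤ C ∧ ∀ n r : ℕ, 1 ≤ n → n ≤ r →
      Q q n * (r : ℝ) ^ α ≤ C * (n : ℝ) ^ α * Q q r := by
  have ha : Antitone q := antitone_nat_of_succ_le hqmono
  obtain ⟨C0, hC0, h0⟩ := bound_of_isBigO_nat_atTop hQ
  obtain ⟨C1, hC1, h1⟩ := bound_of_isBigO_nat_atTop hq'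
  have hQb : ∀ n : ℕ, 1 ≤ n → (n : ℝ) ^ α ≤ C0 * Q q n := by
    intro n hn
    have := (le_abs_self _).trans (h0 (x := n) one_ne_zero)
    rw [div_le_iff₀ (Q_pos q hq0 hqnn n hn)] at this
    simpa using this
  have hqb : ∀ n : ℕ, 1 ≤ n → q n - q (n + 1) ≤ C1 * (n : ℝ) ^ (α - 2) := by
    intro n hn
    have := (le_abs_self _).trans (h1 (x := n) one_ne_zero)
    rw [div_le_iff₀ (Real.rpow_pos_of_pos (by exact_mod_cast hn) _)] at this
    simpa using this
  rcases eq_or_lt_of_le hα1 with rfl | hα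
  · refine ⟨q 0 * C0, by positivity, fun n r hn hnr => ?_⟩
    have hr := hQb r (hn.trans hnr)
    have hQn : Q q n ≤ n * q 0 := by
      unfold Q
      have : ∑ i ∈ Finset.range n, q i ≤ ∑ i ∈ Finset.range n, q 0 :=
        Finset.sum_le_sum fun i hi => ha (Nat.zero_le _)
      simpa using this
    simp only [Real.rpow_one] at *
    calc Q q n * r ≤ (n * q 0) * (C0 * Q q r) := by
          apply mul_le_mul hQn hr (by positivity) (by positivity)
      _ = _ := by ring
  · have hb : 0 < 1 - α := by linarith
    set C2 := C1 * (2 / (1 - α)) with hC2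
    have hC2p : 0 < C2 := by positivity
    have step1 : ∀ a : ℕ, 1 ≤ a → ∀ b : ℕ, a ≤ b →
        q a - q b ≤ C2 * ((a : ℝ) ^ (α - 1) - (b : ℝ) ^ (α - 1)) := by
      intro a ha1 b hab
      induction b, hab using Nat.le_induction with
      | base => simp
      | succ b hab ih =>
        have hb1 : 1 ≤ b := ha1.trans hab
        have h2 := hqb b hb1
        have h3 := diff_low α hα0 hα (b : ℝ) (by exact_mod_cast hb1)
        have h4 := mul_le_mul_of_nonneg_left h3 hC2p.le
        have h5 : C2 * ((1 - α) / 2 * (b : ℝ) ^ (α - 2)) = C1 * (b : ℝ) ^ (α - 2) := by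
          rw [hC2]; field_simp
        push_cast
        linarith
    have step1' : ∀ a : ℕ, 1 ≤ a → ∀ b : ℕ, a ≤ b → q a - q b ≤ C2 * (a : ℝ) ^ (α - 1) := by
      intro a ha1 b hab
      have h2 := step1 a ha1 b hab
      have h3 : 0 ≤ C2 * (b : ℝ) ^ (α - 1) := by positivity
      linarith
    set C3 := q 0 + C2 * (2 / α) with hC3
    have hC3p : 0 < C3 := by positivity
    have step2 : ∀ r n : ℕ, 1 ≤ n → n ≤ r → Q q n - n * q r ≤ C3 * (n : ℝ) ^ α := by
      intro r n hn
      induction n, hn using Nat.le_induction with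
      | base =>
        intro _
        simp only [Q, Finset.range_one, Finset.sum_singleton, Nat.cast_one, Real.one_rpow]
        have : 0 < C2 * (2 / α) := by positivity
        have := hqnn r
        linarith
      | succ n hn ih =>
        intro hnr
        have h2 := ih (by omega)
        have h3 := step1' n hn r (by omega)
        have h4 := diff_up α hα0 hα (n : ℝ) (by exact_mod_cast hn)
        have h4' : 0 ≤ ((n : ℝ) + 1) ^ α - (n : ℝ) ^ α := le_trans (by positivity) h4
        have h5 := mul_le_mul_of_nonneg_left h4 (by positivity : 0 ≤ C2 * (2 / α))
        have h6 : C2 * (2 / α) * (α / 2 * (n : ℝ) ^ (α - 1)) = C2 * (n : ℝ) ^ (α - 1) := by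
          field_simp
        have h7 : 0 ≤ q 0 * (((n : ℝ) + 1) ^ α - (n : ℝ) ^ α) := mul_nonneg hq0.le h4'
        have h8 : Q q (n + 1) = Q q n + q n := by simp [Q, Finset.sum_range_succ]
        rw [h8]
        push_cast
        rw [hC3] at h2 ⊢
        linarith
    refine ⟨1 + C3 * C0, by positivity, fun n r hn hnr => ?_⟩
    have hn' : (1 : ℝ) ≤ n := by exact_mod_cast hn
    have hnr' : (n : ℝ) ≤ r := by exact_mod_cast hnr
    have hr1 : 1 ≤ r := hn.trans hnr
    have h1 := step2 r n hn hnr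
    have h2 := mul_q_le_Q q hqmono r
    have h3 := hQb r hr1
    have h4 : (n : ℝ) * (r : ℝ) ^ α ≤ (n : ℝ) ^ α * r := by
      have e : ∀ x : ℝ, 1 ≤ x → x = x ^ α * x ^ (1 - α) := by
        intro x hx
        rw [← Real.rpow_add (by linarith)]; simp
      have h5 : (n : ℝ) ^ (1 - α) ≤ (r : ℝ) ^ (1 - α) :=
        Real.rpow_le_rpow (by linarith) hnr' hb.le
      calc (n : ℝ) * (r : ℝ) ^ α = ((n : ℝ) ^ α * (n : ℝ) ^ (1 - α)) * (r : ℝ) ^ α := by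
            rw [← e n hn']
        _ ≤ ((n : ℝ) ^ α * (r : ℝ) ^ (1 - α)) * (r : ℝ) ^ α := by gcongr
        _ = (n : ℝ) ^ α * ((r : ℝ) ^ α * (r : ℝ) ^ (1 - α)) := by ring
        _ = _ := by rw [← e r (by linarith)]
    have h6 : (n : ℝ) * q r * (r : ℝ) ^ α ≤ (n : ℝ) ^ α * Q q r := by
      calc (n : ℝ) * q r * (r : ℝ) ^ α = ((n : ℝ) * (r : ℝ) ^ α) * q r := by ring
        _ ≤ ((n : ℝ) ^ α * r) * q r := mul_le_mul_of_nonneg_right h4 (hqnn r)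
        _ = (n : ℝ) ^ α * (r * q r) := by ring
        _ ≤ _ := by gcongr
    calc Q q n * (r : ℝ) ^ α ≤ (n * q r + C3 * (n : ℝ) ^ α) * (r : ℝ) ^ α := by
          gcongr; linarith
      _ = (n : ℝ) * q r * (r : ℝ) ^ α + C3 * (n : ℝ) ^ α * (r : ℝ) ^ α := by ring
      _ ≤ (n : ℝ) ^ α * Q q r + C3 * (n : ℝ) ^ α * (C0 * Q q r) := by gcongr
      _ = _ := by ring

/-! ### The kernels -/

theorem sum_range_mul_block (f : ℕ → ℂ) (a b : ℕ) :
    ∑ i ∈ Finset.range (a * b), f i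
      = ∑ s ∈ Finset.range b, ∑ i ∈ Finset.range a, f (i + a * s) := by
  induction b with
  | zero => simp
  | succ b ih =>
    rw [Nat.mul_succ, Finset.sum_range_add, Finset.sum_range_succ, ih]
    congr 1
    exact Finset.sum_congr rfl fun i _ => by rw [add_comm]

section
variable {m : ℕ → ℕ}

theorem MM_pos (hm : ∀ n, 2 ≤ m n) (n : ℕ) : 0 < MM m n := by
  induction n with
  | zero => simp [MM]
  | succ n ih => exact Nat.mul_pos (by have := hm n; omega) ih

theorem lt_MM (hm : ∀ n, 2 ≤ m n) (n : ℕ) : n < MM m n := by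
  induction n with
  | zero => simp [MM]
  | succ n ih =>
    have := Nat.mul_le_mul_right (MM m n) (hm n)
    simp only [MM]; omega

theorem MM_dvd (k d : ℕ) : MM m k ∣ MM m (k + d) := by
  induction d with
  | zero => simp
  | succ d ih => exact ih.trans (Dvd.intro_left _ rfl)

theorem MM_mono (hm : ∀ n, 2 ≤ m n) {k n : ℕ} (h : k ≤ n) : MM m k ≤ MM m n := by
  obtain ⟨d, rfl⟩ := Nat.exists_eq_add_of_le h
  exact Nat.le_of_dvd (MM_pos hm _) (MM_dvd k d)

theorem psi_eq (hm : ∀ n, 2 ≤ m n) (n T : ℕ) (hT : n + 1 ≤ T) (y : G m) :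
    psi m n y = ∏ k ∈ Finset.range T, rade m k y ^ (n / MM m k % m k) := by
  unfold psi
  apply Finset.prod_subset (by intro i; simp; omega)
  intro k _ hk
  have h1 : n < k := by simp at hk; omega
  rw [Nat.div_eq_of_lt (h1.trans (lt_MM hm k))]
  simp

theorem digit_low (hm : ∀ n, 2 ≤ m n) (n a b k : ℕ) (hk : k < n) :
    (a + MM m n * b) / MM m k % m k = a / MM m k % m k := by
  obtain ⟨d, rfl⟩ := Nat.exists_eq_add_of_le (Nat.succ_le_of_lt hk)
  obtain ⟨t, ht⟩ := MM_dvd (m := m) (k + 1) d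
  rw [Nat.succ_eq_add_one, ht]
  have : a + MM m (k + 1) * t * b = a + MM m k * (m k * (t * b)) := by
    simp only [MM]; ring
  rw [this, Nat.add_mul_div_left _ _ (MM_pos hm k), Nat.add_mul_mod_self_left]

theorem digit_high (hm : ∀ n, 2 ≤ m n) (n a b k : ℕ) (hk : n ≤ k) (ha : a < MM m n) :
    (a + MM m n * b) / MM m k = (MM m n * b) / MM m k := by
  obtain ⟨d, rfl⟩ := Nat.exists_eq_add_of_le hk
  obtain ⟨t, ht⟩ := MM_dvd (m := m) n d
  rw [ht, ← Nat.div_div_eq_div_mul, ← Nat.div_div_eq_div_mul,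
    Nat.add_mul_div_left _ _ (MM_pos hm n), Nat.mul_div_cancel_left _ (MM_pos hm n),
    Nat.div_eq_of_lt ha, zero_add]

theorem psi_add (hm : ∀ n, 2 ≤ m n) (n a b : ℕ) (ha : a < MM m n) (y : G m) :
    psi m (a + MM m n * b) y = psi m a y * psi m (MM m n * b) y := by
  rw [psi_eq hm (a + MM m n * b) (a + MM m n * b + 1) le_rfl,
    psi_eq hm a (a + MM m n * b + 1) (by omega),
    psi_eq hm (MM m n * b) (a + MM m n * b + 1) (by omega), ← Finset.prod_mul_distrib]
  refine Finset.prod_congr rfl fun k _ => ?_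
  rw [← pow_add]
  congr 1
  rcases lt_or_ge k n with hk | hk
  · have h0 := digit_low hm n 0 b k hk
    rw [zero_add, Nat.zero_div, Nat.zero_mod] at h0
    rw [digit_low hm n a b k hk, h0, add_zero]
  · rw [digit_high hm n a b k hk ha, Nat.div_eq_of_lt (ha.trans_le (MM_mono hm hk))]
    simp

theorem psi_MM_mul (hm : ∀ n, 2 ≤ m n) (n s : ℕ) (hs : s < m n) (y : G m) :
    psi m (MM m n * s) y = rade m n y ^ s := by
  rw [psi_eq hm (MM m n * s) (MM m n * s + 1 + n + 1) (by omega)]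
  rw [Finset.prod_eq_single n]
  · rw [Nat.mul_div_cancel_left _ (MM_pos hm n), Nat.mod_eq_of_lt hs]
  · intro k _ hkn
    rcases lt_or_gt_of_ne hkn with hk | hk
    · have h0 := digit_low hm n 0 s k hk
      rw [zero_add, Nat.zero_div, Nat.zero_mod] at h0
      rw [h0, pow_zero]
    · have h1 : MM m n * s < MM m (n + 1) := by
        simp only [MM]; rw [mul_comm]
        exact Nat.mul_lt_mul_of_pos_right hs (MM_pos hm n)
      rw [Nat.div_eq_of_lt (h1.trans_le (MM_mono hm hk))]
      simp
  · intro h; exact absurd (Finset.mem_range.2 (by omega)) h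

theorem rade_norm (k : ℕ) (y : G m) : ‖rade m k y‖ = 1 := by
  unfold rade
  have : (2 * Real.pi * Complex.I * ((y k).val : ℂ) / (m k : ℂ))
    = ((2 * Real.pi * (y k).val / m k : ℝ) : ℂ) * Complex.I := by push_cast; ring
  rw [this, Complex.norm_exp_ofReal_mul_I]

theorem psi_norm (n : ℕ) (y : G m) : ‖psi m n y‖ = 1 := by
  unfold psi
  rw [norm_prod]
  exact Finset.prod_eq_one fun k _ => by rw [norm_pow, rade_norm, one_pow]

theorem rade_geom (hm : ∀ n, 2 ≤ m n) (k : ℕ) (y : G m) (hy : y k ≠ 0) :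
    ∑ s ∈ Finset.range (m k), rade m k y ^ s = 0 := by
  have hmk := hm k
  haveI : NeZero (m k) := ⟨by omega⟩
  have hp := Complex.isPrimitiveRoot_exp (m k) (by omega)
  have he : rade m k y = Complex.exp (2 * Real.pi * Complex.I / (m k : ℂ)) ^ (y k).val := by
    unfold rade
    rw [← Complex.exp_nat_mul]
    congr 1; ring
  have hv0 : (y k).val ≠ 0 := by rwa [Ne, ZMod.val_eq_zero]
  have hv1 : (y k).val < m k := ZMod.val_lt _
  have hne : rade m k y ≠ 1 := by
    rw [he, Ne, hp.pow_eq_one_iff_dvd]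
    intro hd
    have := Nat.le_of_dvd (by omega) hd
    omega
  have hpow : rade m k y ^ m k = 1 := by
    rw [he, pow_right_comm, hp.pow_eq_one, one_pow]
  have h := geom_sum_mul (rade m k y) (m k)
  rw [hpow, sub_self] at h
  exact (mul_eq_zero.1 h).resolve_right (sub_ne_zero.2 hne)

theorem D_MM_succ (hm : ∀ n, 2 ≤ m n) (n : ℕ) (y : G m) :
    D m (MM m (n + 1)) y = D m (MM m n) y * ∑ s ∈ Finset.range (m n), rade m n y ^ s := by
  unfold D
  have : MM m (n + 1) = MM m n * m n := by simp only [MM]; ring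
  rw [this, sum_range_mul_block, Finset.mul_sum]
  refine Finset.sum_congr rfl fun s hs => ?_
  rw [Finset.sum_mul]
  refine Finset.sum_congr rfl fun a ha => ?_
  rw [psi_add hm n a s (Finset.mem_range.1 ha), psi_MM_mul hm n s (Finset.mem_range.1 hs)]

theorem D_MM_zero (hm : ∀ n, 2 ≤ m n) (k : ℕ) (y : G m) (hy : y k ≠ 0) (n : ℕ) (hn : k + 1 ≤ n) :
    D m (MM m n) y = 0 := by
  induction n, hn using Nat.le_induction with
  | base => rw [D_MM_succ hm, rade_geom hm k y hy, mul_zero]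
  | succ n _ ih => rw [D_MM_succ hm, ih, zero_mul]

theorem D_block (hm : ∀ n, 2 ≤ m n) (k : ℕ) (y : G m) (hy : y k ≠ 0) (n : ℕ) (hn : k + 1 ≤ n)
    (a c : ℕ) (ha : a < MM m n) :
    D m (a + MM m n * c) y = psi m (MM m n * c) y * D m a y := by
  have h0 : D m (MM m n * c) y = 0 := by
    unfold D
    rw [sum_range_mul_block]
    refine Finset.sum_eq_zero fun s _ => ?_
    have : ∑ i ∈ Finset.range (MM m n), psi m (i + MM m n * s) y
        = D m (MM m n) y * psi m (MM m n * s) y := by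
      unfold D
      rw [Finset.sum_mul]
      exact Finset.sum_congr rfl fun i hi => psi_add hm n i s (Finset.mem_range.1 hi) y
    rw [this, D_MM_zero hm k y hy n hn, zero_mul]
  have h1 : D m (a + MM m n * c) y = D m (MM m n * c) y
      + ∑ i ∈ Finset.range a, psi m (MM m n * c + i) y := by
    unfold D
    rw [add_comm, Finset.sum_range_add]
  rw [h1, h0, zero_add]
  unfold D
  rw [Finset.mul_sum]
  refine Finset.sum_congr rfl fun i hi => ?_
  rw [add_comm, psi_add hm n i c ((Finset.mem_range.1 hi).trans ha), mul_comm]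

theorem D_norm_le (a : ℕ) (y : G m) : ‖D m a y‖ ≤ a := by
  unfold D
  refine (norm_sum_le _ _).trans ?_
  simp [psi_norm]

theorem D_bound (hm : ∀ n, 2 ≤ m n) (k : ℕ) (y : G m) (hy : y k ≠ 0) (j : ℕ) :
    ‖D m j y‖ ≤ MM m (k + 1) := by
  have hlt := Nat.mod_lt j (MM_pos hm (k + 1))
  rw [← Nat.mod_add_div j (MM m (k + 1)), D_block hm k y hy (k + 1) le_rfl _ _ hlt,
    norm_mul, psi_norm, one_mul]
  exact (D_norm_le _ y).trans (by exact_mod_cast hlt.le)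

theorem S_block (hm : ∀ n, 2 ≤ m n) (k l : ℕ) (hkl : k < l) (y : G m) (hy : y k ≠ 0)
    (hyl : y l ≠ 0) (b : ℕ) :
    ∑ j ∈ Finset.range (MM m (l + 1) * b), D m j y = 0 := by
  rw [sum_range_mul_block]
  refine Finset.sum_eq_zero fun c _ => ?_
  have e : ∀ i ∈ Finset.range (MM m (l + 1)), D m (i + MM m (l + 1) * c) y
      = psi m (MM m (l + 1) * c) y * D m i y := fun i hi =>
    D_block hm k y hy (l + 1) (by omega) i c (Finset.mem_range.1 hi)
  rw [Finset.sum_congr rfl e, ← Finset.mul_sum]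
  have : MM m (l + 1) = MM m l * m l := by simp only [MM]; ring
  have h2 : ∑ i ∈ Finset.range (MM m (l + 1)), D m i y = 0 := by
    rw [this, sum_range_mul_block]
    have e2 : ∀ s ∈ Finset.range (m l), ∑ i ∈ Finset.range (MM m l), D m (i + MM m l * s) y
        = rade m l y ^ s * ∑ i ∈ Finset.range (MM m l), D m i y := by
      intro s hs
      rw [Finset.mul_sum]
      refine Finset.sum_congr rfl fun i hi => ?_
      rw [D_block hm k y hy l (by omega) i s (Finset.mem_range.1 hi),
        psi_MM_mul hm l s (Finset.mem_range.1 hs)]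
    rw [Finset.sum_congr rfl e2, ← Finset.sum_mul, rade_geom hm l y hyl, zero_mul]
  rw [h2, mul_zero]

theorem S_bound (hm : ∀ n, 2 ≤ m n) (k l : ℕ) (hkl : k < l) (y : G m) (hy : y k ≠ 0)
    (hyl : y l ≠ 0) (n : ℕ) :
    ‖∑ j ∈ Finset.range n, D m j y‖ ≤ (MM m (l + 1) : ℝ) * MM m (k + 1) := by
  have hlt := Nat.mod_lt n (MM_pos hm (l + 1))
  have e : n = MM m (l + 1) * (n / MM m (l + 1)) + n % MM m (l + 1) :=
    (Nat.div_add_mod n _).symm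
  rw [e, Finset.sum_range_add, S_block hm k l hkl y hy hyl, zero_add]
  refine (norm_sum_le _ _).trans ((Finset.sum_le_sum fun i _ => D_bound hm k y hy _).trans ?_)
  simp only [Finset.sum_const, Finset.card_range, nsmul_eq_mul]
  have : ((n % MM m (l + 1) : ℕ) : ℝ) ≤ MM m (l + 1) := by exact_mod_cast hlt.le
  gcongr

theorem E_eq (r : ℕ) (y : G m) (n : ℕ) :
    ∑ i ∈ Finset.range n, D m (r - i) y
      = ∑ j ∈ Finset.range (r + 1), D m j y - ∑ j ∈ Finset.range (r + 1 - n), D m j y := by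
  induction n with
  | zero => simp
  | succ n ih =>
    rw [Finset.sum_range_succ, ih]
    rcases le_or_gt n r with h | h
    · have e : r + 1 - n = (r - n) + 1 := by omega
      have e2 : r + 1 - (n + 1) = r - n := by omega
      rw [e, e2, Finset.sum_range_succ (fun j => D m j y) (r - n)]
      ring
    · have e : r + 1 - n = 0 := by omega
      have e2 : r + 1 - (n + 1) = 0 := by omega
      have e3 : r - n = 0 := by omega
      rw [e, e2, e3]
      simp [D]

theorem abel_bound (q : ℕ → ℝ) (hqnn : ∀ n, 0 ≤ q n) (hqmono : ∀ n, q (n + 1) ≤ q n)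
    (d : ℕ → ℂ) (A : ℝ) (hA : ∀ n, ‖∑ i ∈ Finset.range n, d i‖ ≤ A) (a t : ℕ) :
    ‖∑ i ∈ Finset.range t, (q (a + i) : ℂ) * d (a + i)‖ ≤ 2 * A * q a := by
  set E : ℕ → ℂ := fun n => ∑ i ∈ Finset.range n, d i with hE
  have key : ∀ t, ∃ z : ℂ, ‖z‖ ≤ A * (q a - q (a + t)) ∧
      ∑ i ∈ Finset.range t, (q (a + i) : ℂ) * d (a + i)
        = (q (a + t) : ℂ) * E (a + t) - (q a : ℂ) * E a + z := by
    intro t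
    induction t with
    | zero => exact ⟨0, by simp⟩
    | succ t ih =>
      obtain ⟨z, hz, e⟩ := ih
      refine ⟨z + ((q (a + t) - q (a + (t + 1)) : ℝ) : ℂ) * E (a + (t + 1)), ?_, ?_⟩
      · refine (norm_add_le _ _).trans ?_
        rw [norm_mul, Complex.norm_real, Real.norm_eq_abs, abs_of_nonneg (by
          have := hqmono (a + t); rw [← add_assoc]; linarith)]
        have h1 := mul_le_mul_of_nonneg_left (hA (a + (t + 1)))
          (by have := hqmono (a + t); rw [← add_assoc]; linarith :
            0 ≤ q (a + t) - q (a + (t + 1)))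
        linarith
      · have e2 : E (a + (t + 1)) = E (a + t) + d (a + t) := by
          simp only [hE, ← add_assoc]; rw [Finset.sum_range_succ]
        rw [Finset.sum_range_succ, e, e2]
        push_cast
        ring
  obtain ⟨z, hz, e⟩ := key t
  rw [e]
  have n1 : ‖(q (a + t) : ℂ) * E (a + t)‖ ≤ q (a + t) * A := by
    rw [norm_mul, Complex.norm_real, Real.norm_eq_abs, abs_of_nonneg (hqnn _)]
    exact mul_le_mul_of_nonneg_left (hA _) (hqnn _)
  have n2 : ‖(q a : ℂ) * E a‖ ≤ q a * A := by
    rw [norm_mul, Complex.norm_real, Real.norm_eq_abs, abs_of_nonneg (hqnn _)]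
    exact mul_le_mul_of_nonneg_left (hA _) (hqnn _)
  have n3 := norm_add_le ((q (a + t) : ℂ) * E (a + t) - (q a : ℂ) * E a) z
  have n4 := norm_sub_le ((q (a + t) : ℂ) * E (a + t)) ((q a : ℂ) * E a)
  linarith

theorem sum_bound (hm : ∀ n, 2 ≤ m n) (q : ℕ → ℝ) (hqnn : ∀ n, 0 ≤ q n)
    (hqmono : ∀ n, q (n + 1) ≤ q n) (k l : ℕ) (hkl : k < l) (y : G m) (hy : y k ≠ 0)
    (hyl : y l ≠ 0) (r : ℕ) (hr : MM m l ≤ r) :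
    ‖∑ j ∈ Finset.Icc 1 r, (q (r - j) : ℂ) * D m j y‖
      ≤ MM m (k + 1) * Q q (MM m l)
        + 4 * (MM m (l + 1) * MM m (k + 1)) * q (MM m l) := by
  have e1 : ∑ j ∈ Finset.Icc 1 r, (q (r - j) : ℂ) * D m j y
      = ∑ i ∈ Finset.range r, (q i : ℂ) * D m (r - i) y := by
    refine Finset.sum_nbij' (fun j => r - j) (fun i => r - i) ?_ ?_ ?_ ?_ ?_
    · intro j hj; simp at hj ⊢; omega
    · intro j hj; simp at hj ⊢; omega
    · intro j hj; simp at hj ⊢; omega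
    · intro j hj; simp at hj ⊢; omega
    · intro j hj
      simp at hj
      have : r - (r - j) = j := by omega
      simp only [this]
  obtain ⟨t, rfl⟩ := Nat.exists_eq_add_of_le hr
  rw [e1, Finset.sum_range_add]
  refine (norm_add_le _ _).trans (add_le_add ?_ ?_)
  · refine (norm_sum_le _ _).trans ?_
    unfold Q
    rw [Finset.mul_sum]
    refine Finset.sum_le_sum fun i _ => ?_
    rw [norm_mul, Complex.norm_real, Real.norm_eq_abs, abs_of_nonneg (hqnn _), mul_comm]
    exact mul_le_mul_of_nonneg_right (D_bound hm k y hy _) (hqnn _)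
  · have := abel_bound q hqnn hqmono (fun i => D m (MM m l + t - i) y)
      (2 * (MM m (l + 1) * MM m (k + 1))) (fun n => by
        rw [E_eq]
        refine (norm_sub_le _ _).trans ?_
        have h1 := S_bound hm k l hkl y hy hyl (MM m l + t + 1)
        have h2 := S_bound hm k l hkl y hy hyl (MM m l + t + 1 - n)
        linarith) (MM m l) t
    refine this.trans (le_of_eq (by ring))

theorem measurableSet_cyl (N : ℕ) (x : G m) : MeasurableSet (cyl m N x) := by
  have : cyl m N x = ⋂ j : ℕ, ⋂ _ : j < N, (fun y : G m => y j) ⁻¹' {x j} := by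
    ext y; simp [cyl]
  rw [this]
  refine MeasurableSet.iInter fun j => MeasurableSet.iInter fun _ => ?_
  exact measurable_pi_apply j (MeasurableSet.singleton _)

theorem F_bound (hm : ∀ n, 2 ≤ m n) (B : ℕ) (hB : ∀ n, m n ≤ B)
    (α : ℝ) (q : ℕ → ℝ) (hq0 : 0 < q 0) (hqnn : ∀ n, 0 ≤ q n)
    (hqmono : ∀ n, q (n + 1) ≤ q n) (C : ℝ) (hC0 : 0 ≤ C)
    (hC : ∀ n r : ℕ, 1 ≤ n → n ≤ r → Q q n * (r : ℝ) ^ α ≤ C * (n : ℝ) ^ α * Q q r)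
    (k l : ℕ) (hkl : k < l) (y : G m) (hy : y k ≠ 0)
    (hyl : y l ≠ 0) (r : ℕ) (hr : MM m l ≤ r) :
    ‖F m q r y‖ ≤ ((B + 4 * B ^ 2) * C) * (MM m l : ℝ) ^ α * (MM m k : ℝ) / (r : ℝ) ^ α := by
  have hl := MM_pos hm l
  have hr1 : 1 ≤ r := by omega
  have hQr := Q_pos q hq0 hqnn r hr1
  have hQl := Q_pos q hq0 hqnn (MM m l) hl
  have h1 := sum_bound hm q hqnn hqmono k l hkl y hy hyl r hr
  have h2 := hC (MM m l) r hl hr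
  have h3 := mul_q_le_Q q hqmono (MM m l)
  have hk' : (MM m (k + 1) : ℝ) ≤ B * MM m k := by
    have := Nat.mul_le_mul_right (MM m k) (hB k)
    simp only [MM]; exact_mod_cast this
  have hl' : (MM m (l + 1) : ℝ) ≤ B * MM m l := by
    have := Nat.mul_le_mul_right (MM m l) (hB l)
    simp only [MM]; exact_mod_cast this
  have hqM := hqnn (MM m l)
  have hrp : 0 < (r : ℝ) ^ α := Real.rpow_pos_of_pos (by exact_mod_cast hr1) _
  have h4 : ‖∑ j ∈ Finset.Icc 1 r, (q (r - j) : ℂ) * D m j y‖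
      ≤ (B + 4 * B ^ 2) * MM m k * Q q (MM m l) := by
    calc _ ≤ _ := h1
      _ ≤ (B * MM m k) * Q q (MM m l)
        + 4 * ((B * MM m l) * (B * MM m k)) * q (MM m l) := by gcongr
      _ = B * MM m k * Q q (MM m l) + 4 * B ^ 2 * MM m k * (MM m l * q (MM m l)) := by ring
      _ ≤ B * MM m k * Q q (MM m l) + 4 * B ^ 2 * MM m k * Q q (MM m l) := by gcongr
      _ = _ := by ring
  unfold F
  rw [norm_mul, norm_inv, Complex.norm_real, Real.norm_eq_abs, abs_of_pos hQr,
    le_div_iff₀ hrp, inv_mul_eq_div, div_mul_eq_mul_div, div_le_iff₀ hQr]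
  calc _ ≤ (B + 4 * B ^ 2) * MM m k * Q q (MM m l) * (r : ℝ) ^ α := by gcongr
    _ = (B + 4 * B ^ 2) * MM m k * (Q q (MM m l) * (r : ℝ) ^ α) := by ring
    _ ≤ (B + 4 * B ^ 2) * MM m k * (C * (MM m l : ℝ) ^ α * Q q r) := by gcongr
    _ = _ := by ring

theorem natCast_ne (s n : ℕ) (h1 : 1 ≤ s) (h2 : s ≤ n - 1) : (s : ZMod n) ≠ 0 := by
  rw [Ne, ZMod.natCast_eq_zero_iff]
  intro hd
  have := Nat.le_of_dvd (by omega) hd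
  omega

end

/-- Let `0 < α ≤ 1` and let `{q_n}` be a non-increasing sequence of
non-negative reals with `q_0 > 0` satisfying `n^α/Q_n = O(1)` and
`(q_n - q_{n+1})/n^{α-2} = O(1)`. Then there is a constant `c_α` such that for all `N`, all
`r ≥ M_N`, all `0 ≤ k < l ≤ N-1`, `1 ≤ s_k ≤ m_k - 1`, `1 ≤ s_l ≤ m_l - 1` and all
`x ∈ I_{l+1}(s_k e_k + s_l e_l)`:
`∫_{I_N} |F_r(x-t)| dμ(t) ≤ c_α M_l^α M_k / (r^α M_N)`. -/
theorem statement8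
    (m : ℕ → ℕ) (hm : ∀ n, 2 ≤ m n) (hmb : ∃ B, ∀ n, m n ≤ B)
    (μ : Measure (G m)) [IsProbabilityMeasure μ]
    (hμ : ∀ (n : ℕ) (x : G m), μ (cyl m n x) = ((MM m n : ℝ≥0∞))⁻¹)
    (α : ℝ) (hα0 : 0 < α) (hα1 : α ≤ 1)
    (q : ℕ → ℝ) (hq0 : 0 < q 0) (hqnn : ∀ n, 0 ≤ q n) (hqmono : ∀ n, q (n + 1) ≤ q n)
    (hQ : (fun n : ℕ => (n : ℝ) ^ α / Q q n) =O[atTop] (fun _ => (1 : ℝ)))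
    (hq' : (fun n : ℕ => (q n - q (n + 1)) / (n : ℝ) ^ (α - 2)) =O[atTop] (fun _ => (1 : ℝ))) :
    ∃ c : ℝ, ∀ N r : ℕ, MM m N ≤ r → ∀ k l : ℕ, k < l → l ≤ N - 1 → ∀ sk sl : ℕ,
      1 ≤ sk → sk ≤ m k - 1 → 1 ≤ sl → sl ≤ m l - 1 →
      ∀ x ∈ cyl m (l + 1) (twoSpike m k sk l sl),
        ∫⁻ t in cyl m N 0, (‖F m q r (x - t)‖₊ : ℝ≥0∞) ∂μ ≤
          ENNReal.ofReal (c * (MM m l : ℝ) ^ α * (MM m k : ℝ) /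
            ((r : ℝ) ^ α * (MM m N : ℝ))) := by
  obtain ⟨B, hB⟩ := hmb
  obtain ⟨C, hC0, hC⟩ := Q_ratio α hα0 hα1 q hq0 hqnn hqmono hQ hq'
  refine ⟨(B + 4 * B ^ 2) * C, ?_⟩
  intro N r hNr k l hkl hlN sk sl hsk hsk' hsl hsl' x hx
  have hlN' : l < N := by omega
  have hr : MM m l ≤ r := (MM_mono hm hlN'.le).trans hNr
  have hMN : (0 : ℝ) < MM m N := by exact_mod_cast MM_pos hm N
  set b : ℝ := ((B + 4 * B ^ 2) * C) * (MM m l : ℝ) ^ α * (MM m k : ℝ) / (r : ℝ) ^ α with hb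
  have hpt : ∀ t ∈ cyl m N 0, (‖F m q r (x - t)‖₊ : ℝ≥0∞) ≤ ENNReal.ofReal b := by
    intro t ht
    have hxk : x k = (sk : ZMod (m k)) := by
      rw [hx k (by omega)]; simp [twoSpike]
    have hxl : x l = (sl : ZMod (m l)) := by
      rw [hx l (by omega)]; simp [twoSpike, hkl.ne']
    have htk : t k = 0 := ht k (by omega)
    have htl : t l = 0 := ht l (by omega)
    have hyk : (x - t) k ≠ 0 := by
      rw [Pi.sub_apply, htk, sub_zero, hxk]; exact natCast_ne _ _ hsk hsk'
    have hyl : (x - t) l ≠ 0 := by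
      rw [Pi.sub_apply, htl, sub_zero, hxl]; exact natCast_ne _ _ hsl hsl'
    have := F_bound hm B hB α q hq0 hqnn hqmono C hC0 hC k l hkl (x - t) hyk hyl r hr
    rw [← enorm_eq_nnnorm, ← ofReal_norm_eq_enorm]
    exact ENNReal.ofReal_le_ofReal this
  calc ∫⁻ t in cyl m N 0, (‖F m q r (x - t)‖₊ : ℝ≥0∞) ∂μ
      ≤ ∫⁻ _ in cyl m N 0, ENNReal.ofReal b ∂μ :=
        setLIntegral_mono' (measurableSet_cyl N 0) hpt
    _ = ENNReal.ofReal b * (MM m N : ℝ≥0∞)⁻¹ := by rw [setLIntegral_const, hμ]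
    _ = ENNReal.ofReal (b / MM m N) := by
        rw [ENNReal.ofReal_div_of_pos hMN, ENNReal.ofReal_natCast, div_eq_mul_inv]
    _ = _ := by rw [hb, div_div]
    _ ≤ _ := le_rfl

end Vilenkin
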